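/- Let π be a degree sequence of a tree with boundary. A tree with boundary G with degree sequence π has the Faber-Krahn property in the class T_π of all trees with boundary with degree sequence π if and only if G is an SLO*-tree. Moreover G is then uniquely determined up to isomorphism. -/

import Mathlib

/-!
Common definitions for Faber-Krahn type inequalities for trees
(Bıyıkoğlu–Leydold, "Faber-Krahn Type Inequalities for Trees").

A *tree (graph) with boundary* is a finite simple connected graph in which
boundary vertices are exactly the vertices of degree 1 and interior vertices
are the vertices of degree ≥ 2; both sets are required to be nonempty.
The Dirichlet operator is the Laplacian restricted to functions vanishing on
the boundary; `dirichletLambda` is its smallest eigenvalue.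
-/

open Finset
open scoped Classical

noncomputable section

namespace FK

variable {V : Type*} [Fintype V] [DecidableEq V]

/-- A vertex is a boundary vertex iff it has degree `1`. -/
def IsBoundary (G : SimpleGraph V) (v : V) : Prop := G.degree v = 1

/-- A vertex is an interior vertex iff it has degree at least `2`. -/
def IsInterior (G : SimpleGraph V) (v : V) : Prop := 2 ≤ G.degree v

/-- A tree with boundary: a tree with at least one interior and
one boundary vertex. -/
def IsTreeWithBoundary (G : SimpleGraph V) : Prop :=
  G.IsTree ∧ (∃ v, IsInterior G v) ∧ (∃ v, IsBoundary G v)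

/-- A connected graph with boundary: every vertex is either a boundary vertex
(degree 1) or an interior vertex (degree ≥ 2), both kinds occur, and no edge
joins two boundary vertices. -/
def IsGraphWithBoundary (G : SimpleGraph V) : Prop :=
  G.Connected ∧ (∀ v, IsBoundary G v ∨ IsInterior G v) ∧
    (∃ v, IsInterior G v) ∧ (∃ v, IsBoundary G v) ∧
    (∀ v w, G.Adj v w → IsBoundary G v → ¬ IsBoundary G w)

/-- The finset of interior vertices. -/
def interiorFinset (G : SimpleGraph V) : Finset V := univ.filter (fun v => IsInterior G v)

/-- The finset of boundary vertices. -/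
def boundaryFinset (G : SimpleGraph V) : Finset V := univ.filter (fun v => IsBoundary G v)

/-- The degree sequence of `G`, as a multiset. -/
def degreeMultiset (G : SimpleGraph V) : Multiset ℕ := Finset.univ.val.map (fun v => G.degree v)

/-- The graph Laplacian `Δ = D - A` applied to a function `f : V → ℝ`. -/
def lapApply (G : SimpleGraph V) (f : V → ℝ) (v : V) : ℝ :=
  (G.degree v : ℝ) * f v - ∑ w ∈ G.neighborFinset v, f w

/-- `f` (vanishing on the boundary, nonzero) is an eigenfunction of the
Dirichlet operator `Δ₀` with eigenvalue `μ`: the eigenvalue equation holds at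
every interior vertex. -/
def IsDirichletEigenpair (G : SimpleGraph V) (μ : ℝ) (f : V → ℝ) : Prop :=
  f ≠ 0 ∧ (∀ v, IsBoundary G v → f v = 0) ∧
    ∀ v, IsInterior G v → lapApply G f v = μ * f v

/-- The first (smallest) Dirichlet eigenvalue `λ(G)`. -/
def dirichletLambda (G : SimpleGraph V) : ℝ :=
  sInf {μ : ℝ | ∃ f : V → ℝ, IsDirichletEigenpair G μ f}

/-- The quadratic form `⟨Δ f, f⟩ = Σ_{(u,v)∈E} (f u - f v)²` of the Laplacian
(each edge counted once). -/
def quadForm (G : SimpleGraph V) (f : V → ℝ) : ℝ :=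
  (∑ v, ∑ w ∈ G.neighborFinset v, (f v - f w) ^ 2) / 2

/-- The Rayleigh quotient `R_G(f)`. -/
def rayleigh (G : SimpleGraph V) (f : V → ℝ) : ℝ :=
  quadForm G f / ∑ v, f v ^ 2

/-- `w` is a child of `v` in the tree `G` rooted at `v₀`
(heights are distances from the root `v₀`). -/
def IsChild (G : SimpleGraph V) (v₀ v w : V) : Prop :=
  G.Adj v w ∧ G.dist v₀ w = G.dist v₀ v + 1

/-- A spiral-like ordering (SLO-ordering) of the vertices of the tree `G`
rooted at `v₀`: a (strict) well-ordering `lt` satisfying (S1)-(S3). -/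
def IsSLOOrdering (G : SimpleGraph V) (v₀ : V) (lt : V → V → Prop) : Prop :=
  IsStrictTotalOrder V lt ∧
  (∀ v w, lt v w → G.dist v₀ v ≤ G.dist v₀ w) ∧
  (∀ v₁ v₂ w₁ w₂, lt v₁ v₂ → IsChild G v₀ v₁ w₁ → IsChild G v₀ v₂ w₂ → lt w₁ w₂) ∧
  (∀ v w, lt v w → IsBoundary G v → IsBoundary G w)

/-- A spiral-like ordering with increasing degrees (SLO*-ordering):
additionally (S4). -/
def IsSLOStarOrdering (G : SimpleGraph V) (v₀ : V) (lt : V → V → Prop) : Prop :=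
  IsSLOOrdering G v₀ lt ∧
  ∀ v w, lt v w → IsInterior G v → IsInterior G w → G.degree v ≤ G.degree w

/-- An SLO-tree: a tree with boundary admitting an SLO-ordering. -/
def IsSLOTree (G : SimpleGraph V) : Prop :=
  IsTreeWithBoundary G ∧ ∃ (v₀ : V) (lt : V → V → Prop), IsSLOOrdering G v₀ lt

/-- An SLO*-tree: a tree with boundary admitting an SLO*-ordering. -/
def IsSLOStarTree (G : SimpleGraph V) : Prop :=
  IsTreeWithBoundary G ∧ ∃ (v₀ : V) (lt : V → V → Prop), IsSLOStarOrdering G v₀ lt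

end FK

namespace FK

/-- Membership in the class `T_π`: trees with boundary with degree sequence
(multiset) `π`. -/
def inClassPi (π : Multiset ℕ) {n : ℕ} (G : SimpleGraph (Fin n)) : Prop :=
  IsTreeWithBoundary G ∧ degreeMultiset G = π

/-- The Faber-Krahn property in `T_π`. -/
def hasFKPi (π : Multiset ℕ) (G : SimpleGraph (Fin (Multiset.card π))) : Prop :=
  inClassPi π G ∧ ∀ G' : SimpleGraph (Fin (Multiset.card π)), inClassPi π G' →
    dirichletLambda G ≤ dirichletLambda G'

/-!
Let `G` minimize the first Dirichlet eigenvalue in its class, let `f` be its positive first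
eigenfunction, and root `G` at a maximum of `f`. Moving branches from a vertex `v` to a vertex `w`
and back keeps a tree a tree; if moreover the degrees are merely permuted and the energy of `f` does
not increase, then `f` is still a first eigenfunction of the new tree, so the Laplacian of `f` at
`v` cannot have changed. Exchanging two branches in this way shows that `f` decreases along a
breadth-first ordering in which siblings are sorted by `f`; moving the excess branches of a vertex
to a later one shows that the degrees of the interior vertices increase along it. Hence `G` is an
SLO*-tree.

Conversely, the degree sequence determines the degree of the `i`-th vertex of an SLO*-tree, hence
also the parent of the `i`-th vertex, so the SLO*-trees in `T_π` are all isomorphic. The class is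
finite, so it contains a minimizer, which is an SLO*-tree and thus isomorphic to each of them.
-/

section Dirichlet

open Matrix

variable {V : Type*} [Fintype V] {G : SimpleGraph V} {f k : V → ℝ} {μ : ℝ} {v : V}

lemma IsInterior.not_isBoundary (h : IsInterior G v) : ¬ IsBoundary G v := by
  unfold IsInterior at h
  unfold IsBoundary
  omega

lemma IsInterior.isBoundary_or_isInterior (hG : G.Connected) (h : IsInterior G v) (w : V) :
    IsBoundary G w ∨ IsInterior G w := by
  unfold IsInterior at h
  obtain ⟨u, hu⟩ := (G.degree_pos_iff_exists_adj v).1 (by omega)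
  have : Nontrivial V := ⟨v, u, hu.ne⟩
  have : 0 < G.degree w := hG.preconnected.degree_pos_of_nontrivial w
  unfold IsBoundary IsInterior
  omega

lemma IsTreeWithBoundary.isBoundary_or_isInterior (hG : IsTreeWithBoundary G) (v : V) :
    IsBoundary G v ∨ IsInterior G v :=
  let ⟨_, hu⟩ := hG.2.1
  hu.isBoundary_or_isInterior hG.1.connected v

/-- `f` lies in the domain of the Dirichlet operator: it vanishes on the boundary. -/
def VanishesOnBoundary (G : SimpleGraph V) (f : V → ℝ) : Prop := ∀ v, IsBoundary G v → f v = 0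

lemma vanishesOnBoundary_single (hv : ¬ IsBoundary G v) :
    VanishesOnBoundary G (Pi.single v 1) := fun u hu => by
  rw [Pi.single_eq_of_ne]
  rintro rfl
  exact hv hu

lemma VanishesOnBoundary.add_smul (hf : VanishesOnBoundary G f) (hk : VanishesOnBoundary G k)
    (t : ℝ) : VanishesOnBoundary G (f + t • k) := fun v hv => by simp [hf v hv, hk v hv]

lemma lapApply_eq_lapMatrix_mulVec (G : SimpleGraph V) (f : V → ℝ) :
    lapApply G f = G.lapMatrix ℝ *ᵥ f :=
  funext fun v => (G.lapMatrix_mulVec_apply v f).symm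

lemma lapApply_add_smul (G : SimpleGraph V) (f k : V → ℝ) (t : ℝ) :
    lapApply G (f + t • k) = lapApply G f + t • lapApply G k := by
  simp only [lapApply_eq_lapMatrix_mulVec, mulVec_add, mulVec_smul]

lemma dotProduct_lapApply_comm (G : SimpleGraph V) (f k : V → ℝ) :
    f ⬝ᵥ lapApply G k = k ⬝ᵥ lapApply G f := by
  rw [lapApply_eq_lapMatrix_mulVec, lapApply_eq_lapMatrix_mulVec, dotProduct_mulVec,
    ← mulVec_transpose, (G.isSymm_lapMatrix (R := ℝ)).eq, dotProduct_comm]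

lemma quadForm_eq_toLinearMap₂' (G : SimpleGraph V) (f : V → ℝ) :
    quadForm G f = Matrix.toLinearMap₂' ℝ (G.lapMatrix ℝ) f f := by
  rw [G.lapMatrix_toLinearMap₂' ℝ]
  simp only [quadForm, SimpleGraph.neighborFinset_eq_filter, sum_filter]

lemma quadForm_eq_dotProduct (G : SimpleGraph V) (f : V → ℝ) :
    quadForm G f = f ⬝ᵥ lapApply G f := by
  rw [quadForm_eq_toLinearMap₂', lapApply_eq_lapMatrix_mulVec, Matrix.toLinearMap₂'_apply']

lemma quadForm_nonneg (G : SimpleGraph V) (f : V → ℝ) : 0 ≤ quadForm G f := by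
  unfold quadForm
  positivity

lemma quadForm_add_smul (G : SimpleGraph V) (f k : V → ℝ) (t : ℝ) :
    quadForm G (f + t • k)
      = quadForm G f + 2 * t * (k ⬝ᵥ lapApply G f) + t ^ 2 * quadForm G k := by
  simp only [quadForm_eq_dotProduct, lapApply_add_smul, add_dotProduct, dotProduct_add,
    smul_dotProduct, dotProduct_smul, smul_eq_mul, dotProduct_lapApply_comm G f k]
  ring

lemma quadForm_smul (G : SimpleGraph V) (t : ℝ) (f : V → ℝ) :
    quadForm G (t • f) = t ^ 2 * quadForm G f := by
  simp only [quadForm_eq_dotProduct, lapApply_eq_lapMatrix_mulVec, mulVec_smul, smul_dotProduct,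
    dotProduct_smul, smul_eq_mul]
  ring

lemma quadForm_abs_le (G : SimpleGraph V) (f : V → ℝ) : quadForm G |f| ≤ quadForm G f := by
  unfold quadForm
  refine div_le_div_of_nonneg_right (sum_le_sum fun v _ => sum_le_sum fun w _ => ?_) zero_le_two
  exact sq_le_sq.2 (abs_abs_sub_abs_le_abs_sub _ _)

/-- The quadratic form `Q - μ ‖·‖²` is nonnegative on the functions vanishing on the boundary and
zero at `f`, so its derivative at `f` vanishes in all these directions. -/
lemma lapApply_eq_of_quadForm_le
    (hμ : ∀ k, VanishesOnBoundary G k → μ * (k ⬝ᵥ k) ≤ quadForm G k)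
    (hf : VanishesOnBoundary G f) (hle : quadForm G f ≤ μ * (f ⬝ᵥ f)) (hv : IsInterior G v) :
    lapApply G f v = μ * f v := by
  let e : V → ℝ := Pi.single v 1
  have hnonneg : ∀ t : ℝ, 0 ≤ (quadForm G e - μ) * (t * t)
      + 2 * (lapApply G f v - μ * f v) * t + 0 := fun t => by
    have h := hμ _ (hf.add_smul (vanishesOnBoundary_single hv.not_isBoundary) t)
    simp only [quadForm_add_smul, add_dotProduct, dotProduct_add, smul_dotProduct, dotProduct_smul,
      smul_eq_mul, single_one_dotProduct, dotProduct_single_one, Pi.single_eq_same, Pi.add_apply,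
      Pi.smul_apply, mul_one] at h
    linarith
  have := discrim_le_zero hnonneg
  rw [discrim] at this
  nlinarith [sq_nonneg (lapApply G f v - μ * f v)]

lemma isClosed_vanishesOnBoundary (G : SimpleGraph V) :
    IsClosed {f : V → ℝ | VanishesOnBoundary G f} := by
  have : {f : V → ℝ | VanishesOnBoundary G f} = ⋂ v, ⋂ _ : IsBoundary G v, {f | f v = 0} := by
    ext
    simp [VanishesOnBoundary]
  rw [this]
  exact isClosed_iInter fun v => isClosed_iInter fun _ =>
    isClosed_eq (continuous_apply v) continuous_const

lemma isCompact_unitSphere_vanishesOnBoundary (G : SimpleGraph V) :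
    IsCompact {f : V → ℝ | VanishesOnBoundary G f ∧ f ⬝ᵥ f = 1} := by
  refine Metric.isCompact_of_isClosed_isBounded
    ((isClosed_vanishesOnBoundary G).inter (isClosed_eq (by fun_prop) continuous_const)) ?_
  refine (Metric.isBounded_closedBall (x := 0) (r := 1)).subset fun f hf => ?_
  rw [mem_closedBall_zero_iff, pi_norm_le_iff_of_nonneg zero_le_one]
  intro v
  rw [Real.norm_eq_abs, ← sq_le_one_iff_abs_le_one, ← hf.2, sq]
  exact single_le_sum (f := fun v => f v * f v) (fun i _ => mul_self_nonneg _) (mem_univ v)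

lemma exists_forall_quadForm_mul_le (hv : ¬ IsBoundary G v) :
    ∃ f, VanishesOnBoundary G f ∧ f ⬝ᵥ f = 1 ∧
      ∀ k, VanishesOnBoundary G k → quadForm G f * (k ⬝ᵥ k) ≤ quadForm G k := by
  have hcont : Continuous (quadForm G) := by unfold quadForm; fun_prop
  obtain ⟨f, hf, hmin⟩ := (isCompact_unitSphere_vanishesOnBoundary G).exists_isMinOn
    ⟨Pi.single v 1, vanishesOnBoundary_single hv, by simp⟩ hcont.continuousOn
  refine ⟨f, hf.1, hf.2, fun k hk => ?_⟩
  obtain rfl | hk0 := eq_or_ne k 0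
  · simpa using quadForm_nonneg G 0
  have hpos : 0 < k ⬝ᵥ k := by simpa using dotProduct_star_self_pos_iff.2 hk0
  have hunit : (√(k ⬝ᵥ k))⁻¹ ^ 2 * (k ⬝ᵥ k) = 1 := by
    rw [inv_pow, Real.sq_sqrt hpos.le, inv_mul_cancel₀ hpos.ne']
  have hle : quadForm G f ≤ quadForm G ((√(k ⬝ᵥ k))⁻¹ • k) := hmin
    ⟨fun v hv => by simp [hk v hv], by
      rw [smul_dotProduct, dotProduct_smul, smul_eq_mul, smul_eq_mul, ← mul_assoc, ← sq, hunit]⟩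
  rw [quadForm_smul, inv_pow, Real.sq_sqrt hpos.le, inv_mul_eq_div, le_div_iff₀ hpos] at hle
  exact hle

lemma IsDirichletEigenpair.quadForm_eq (hG : ∀ v, IsBoundary G v ∨ IsInterior G v)
    (hf : IsDirichletEigenpair G μ f) : quadForm G f = μ * (f ⬝ᵥ f) := by
  rw [quadForm_eq_dotProduct, dotProduct, dotProduct, mul_sum]
  refine sum_congr rfl fun v _ => ?_
  rcases hG v with hv | hv
  · simp [hf.2.1 v hv]
  · rw [hf.2.2 v hv]; ring

lemma exists_isDirichletEigenpair_and_forall_mul_le (hG : ∀ v, IsBoundary G v ∨ IsInterior G v)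
    (hv : IsInterior G v) :
    (∃ f, IsDirichletEigenpair G (dirichletLambda G) f) ∧
      ∀ k, VanishesOnBoundary G k → dirichletLambda G * (k ⬝ᵥ k) ≤ quadForm G k := by
  obtain ⟨f, hfb, hf1, hmin⟩ := exists_forall_quadForm_mul_le hv.not_isBoundary
  have hpair : IsDirichletEigenpair G (quadForm G f) f :=
    ⟨by rintro rfl; simp at hf1, hfb,
      fun v hv => lapApply_eq_of_quadForm_le hmin hfb (by rw [hf1, mul_one]) hv⟩
  have hlam : dirichletLambda G = quadForm G f := by
    refine IsLeast.csInf_eq ⟨⟨f, hpair⟩, ?_⟩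
    rintro μ ⟨g, hg⟩
    have hle := hmin g hg.2.1
    rw [hg.quadForm_eq hG] at hle
    exact le_of_mul_le_mul_right hle (by simpa using dotProduct_star_self_pos_iff.2 hg.1)
  rw [hlam]
  exact ⟨⟨f, hpair⟩, hmin⟩

lemma forall_of_forall_adj {W : Type*} {H : SimpleGraph W} (hH : H.Preconnected) {P : W → Prop}
    (hP : ∀ v w, H.Adj v w → P v → P w) {v : W} (hv : P v) (w : W) : P w := by
  obtain ⟨p⟩ := hH v w
  induction p with
  | nil => exact hv
  | cons h _ ih => exact ih (hP _ _ h hv)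

lemma IsBoundary.eq_of_adj {u w : V} (hv : IsBoundary G v) (hu : G.Adj v u) (hw : G.Adj v w) :
    u = w :=
  card_le_one.1 ((G.card_neighborFinset_eq_degree v).trans hv).le
    u ((G.mem_neighborFinset v u).2 hu) w ((G.mem_neighborFinset v w).2 hw)

lemma IsDirichletEigenpair.eq_zero_of_adj (hf : IsDirichletEigenpair G μ f) (h0 : 0 ≤ f)
    (hv : IsInterior G v) (hfv : f v = 0) {w : V} (hw : G.Adj v w) : f w = 0 := by
  have hlap := hf.2.2 v hv
  rw [lapApply, hfv, mul_zero, mul_zero, zero_sub, neg_eq_zero] at hlap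
  exact (sum_eq_zero_iff_of_nonneg fun u _ => h0 u).1 hlap w ((G.mem_neighborFinset v w).2 hw)

lemma IsDirichletEigenpair.pos (hG : G.Connected) (hf : IsDirichletEigenpair G μ f) (h0 : 0 ≤ f)
    (hv : IsInterior G v) : 0 < f v := by
  refine (h0 v).lt_of_ne' fun hfv => hf.1 <| funext fun w => ?_
  refine (forall_of_forall_adj hG.preconnected (P := fun u => f u = 0 ∧ ∀ w, G.Adj u w → f w = 0)
    ?_ ⟨hfv, fun _ => hf.eq_zero_of_adj h0 hv hfv⟩ w).1
  rintro u w huw ⟨hu, hadj⟩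
  refine ⟨hadj w huw, fun x hx => ?_⟩
  rcases hv.isBoundary_or_isInterior hG w with hw | hw
  · rw [hw.eq_of_adj hx huw.symm, hu]
  · exact hf.eq_zero_of_adj h0 hw (hadj w huw) hx

/-- `f` is a first Dirichlet eigenfunction, chosen positive at the interior vertices (by the
Perron-Frobenius theorem this is possible in an essentially unique way). -/
structure IsPerron (G : SimpleGraph V) (f : V → ℝ) : Prop where
  eigenpair : IsDirichletEigenpair G (dirichletLambda G) f
  pos : ∀ v, IsInterior G v → 0 < f v

lemma exists_isPerron (hG : G.Connected) (hv : IsInterior G v) : ∃ f, IsPerron G f := by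
  have hint := hv.isBoundary_or_isInterior hG
  obtain ⟨⟨f, hf⟩, hmin⟩ := exists_isDirichletEigenpair_and_forall_mul_le hint hv
  have habs : VanishesOnBoundary G |f| := fun u hu => by simp [hf.2.1 u hu]
  have hle : quadForm G |f| ≤ dirichletLambda G * (|f| ⬝ᵥ |f|) := by
    have : |f| ⬝ᵥ |f| = f ⬝ᵥ f := sum_congr rfl fun u _ => abs_mul_abs_self (f u)
    rw [this, ← hf.quadForm_eq hint]
    exact quadForm_abs_le G f
  have hpair : IsDirichletEigenpair G (dirichletLambda G) |f| :=
    ⟨by simpa using hf.1, habs, fun u hu => lapApply_eq_of_quadForm_le hmin habs hle hu⟩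
  exact ⟨|f|, hpair, fun u => hpair.pos hG (abs_nonneg f)⟩

lemma IsDirichletEigenpair.eigenvalue_pos (hG : G.Connected) (hv : IsInterior G v) {b : V}
    (hb : IsBoundary G b) (hf : IsDirichletEigenpair G μ f) : 0 < μ := by
  have hpos : 0 < f ⬝ᵥ f := by simpa using dotProduct_star_self_pos_iff.2 hf.1
  have hq := hf.quadForm_eq (hv.isBoundary_or_isInterior hG)
  refine pos_of_mul_pos_left (hq ▸ (quadForm_nonneg G f).lt_of_ne' fun h0 => hf.1 ?_) hpos.le
  rw [quadForm_eq_toLinearMap₂',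
    G.lapMatrix_toLinearMap₂'_apply'_eq_zero_iff_forall_reachable] at h0
  funext u
  rw [h0 u b (hG.preconnected u b), hf.2.1 b hb, Pi.zero_apply]

namespace IsPerron

lemma eq_zero (hf : IsPerron G f) (hv : IsBoundary G v) : f v = 0 := hf.eigenpair.2.1 v hv

lemma lapApply_eq (hf : IsPerron G f) (hv : IsInterior G v) :
    lapApply G f v = dirichletLambda G * f v := hf.eigenpair.2.2 v hv

end IsPerron

end Dirichlet

section Minimizer

open Matrix

variable {V : Type*} [Fintype V] {G G' : SimpleGraph V}

lemma exists_degree_iff_of_degreeMultiset_eq (h : degreeMultiset G' = degreeMultiset G)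
    (P : ℕ → Prop) : (∃ v, P (G'.degree v)) ↔ ∃ v, P (G.degree v) := by
  have hmem (H : SimpleGraph V) : (∃ v, P (H.degree v)) ↔ ∃ d ∈ degreeMultiset H, P d := by
    simp [degreeMultiset]
  rw [hmem, hmem, h]

/-- The degrees determine the number of edges. -/
lemma isTree_of_degreeMultiset_eq (hG : G.IsTree) (hG' : G'.Connected)
    (h : degreeMultiset G' = degreeMultiset G) : G'.IsTree := by
  have hsum : ∑ v, G'.degree v = ∑ v, G.degree v := congrArg Multiset.sum h
  rw [SimpleGraph.sum_degrees_eq_twice_card_edges, SimpleGraph.sum_degrees_eq_twice_card_edges]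
    at hsum
  have hcard := hG.card_edgeFinset
  rw [SimpleGraph.isTree_iff_connected_and_card, Nat.card_eq_fintype_card,
    Nat.card_eq_fintype_card, ← SimpleGraph.edgeFinset_card]
  exact ⟨hG', by omega⟩

lemma IsTreeWithBoundary.of_degreeMultiset_eq (hG : IsTreeWithBoundary G) (hG' : G'.Connected)
    (h : degreeMultiset G' = degreeMultiset G) : IsTreeWithBoundary G' :=
  ⟨isTree_of_degreeMultiset_eq hG.1 hG' h,
    (exists_degree_iff_of_degreeMultiset_eq h (2 ≤ ·)).2 hG.2.1,
    (exists_degree_iff_of_degreeMultiset_eq h (· = 1)).2 hG.2.2⟩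

lemma degreeMultiset_eq_of_degree_comp_perm (σ : Equiv.Perm V)
    (hσ : ∀ v, G'.degree v = G.degree (σ v)) : degreeMultiset G' = degreeMultiset G := by
  have : (fun v => G'.degree v) = (fun v => G.degree v) ∘ σ := funext hσ
  rw [degreeMultiset, this, ← Multiset.map_map, Multiset.map_univ_val_equiv, degreeMultiset]

/-- The Faber-Krahn property: `G` minimizes the first Dirichlet eigenvalue among the trees with
boundary that have its vertex set and its degrees. -/
def IsFaberKrahn (G : SimpleGraph V) : Prop :=
  ∀ G' : SimpleGraph V, IsTreeWithBoundary G' → degreeMultiset G' = degreeMultiset G →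
    dirichletLambda G ≤ dirichletLambda G'

/-- Evaluating the Rayleigh quotient of `G'` at `f` gives `λ(G') ≤ λ(G)`; so by minimality `f` is a
first eigenfunction of `G'`, too. -/
lemma IsFaberKrahn.lapApply_eq {f : V → ℝ} {v : V} (hmin : IsFaberKrahn G)
    (hG : IsTreeWithBoundary G) (hf : IsPerron G f) (hG' : G'.Connected) (σ : Equiv.Perm V)
    (hσ : ∀ v, G'.degree v = G.degree (σ v))
    (hint : ∀ v, IsInterior G v → IsInterior G (σ v))
    (hquad : quadForm G' f ≤ quadForm G f) (hv : IsInterior G v) :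
    lapApply G' f v = lapApply G f v := by
  have hdeg := degreeMultiset_eq_of_degree_comp_perm σ hσ
  have hT' := hG.of_degreeMultiset_eq hG' hdeg
  have hint' (u) (hu : IsInterior G u) : IsInterior G' u := by
    unfold IsInterior
    rw [hσ]
    exact hint u hu
  have hvanish : VanishesOnBoundary G' f := fun u hu =>
    hf.eq_zero <| (hG.isBoundary_or_isInterior u).resolve_right fun h =>
      (hint' u h).not_isBoundary hu
  have hspec := (exists_isDirichletEigenpair_and_forall_mul_le hT'.isBoundary_or_isInterior
    (hint' v hv)).2
  rw [hf.eigenpair.quadForm_eq hG.isBoundary_or_isInterior] at hquad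
  have hpos : 0 < f ⬝ᵥ f := by simpa using dotProduct_star_self_pos_iff.2 hf.eigenpair.1
  have hlam : dirichletLambda G' = dirichletLambda G :=
    (le_of_mul_le_mul_right ((hspec f hvanish).trans hquad) hpos).antisymm (hmin G' hT' hdeg)
  rw [hf.lapApply_eq hv, ← hlam]
  exact lapApply_eq_of_quadForm_le hspec hvanish (hlam ▸ hquad) (hint' v hv)

end Minimizer

section Exchange

open Matrix

/-- For every `z ∈ Z` interchange whether `z` is adjacent to `v` and whether it is adjacent to `w`,
that is, move the branches with roots in `Z` from `v` to `w` and vice versa. Meaningful only if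
`v, w ∉ Z`. -/
def exchange {V : Type*} (G : SimpleGraph V) (v w : V) (Z : Finset V) : SimpleGraph V where
  Adj p q := if p ∈ Z ∨ q ∈ Z then G.Adj (Equiv.swap v w p) (Equiv.swap v w q) else G.Adj p q
  symm := ⟨fun p q h => by simpa only [or_comm, G.adj_comm] using h⟩
  loopless := ⟨fun p h => by simp at h⟩

/-- The graph `G` with all edges at vertices of `Z` removed. -/
def avoid {V : Type*} (G : SimpleGraph V) (Z : Finset V) : SimpleGraph V where
  Adj p q := G.Adj p q ∧ p ∉ Z ∧ q ∉ Z
  symm := ⟨fun _ _ h => ⟨h.1.symm, h.2.2, h.2.1⟩⟩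
  loopless := ⟨fun p h => G.loopless.irrefl p h.1⟩

variable {V : Type*} {G : SimpleGraph V} {v w : V} {Z : Finset V}

lemma exchange_adj {p q : V} : (exchange G v w Z).Adj p q ↔
    if p ∈ Z ∨ q ∈ Z then G.Adj (Equiv.swap v w p) (Equiv.swap v w q) else G.Adj p q := .rfl

lemma notMem_of_reachable_avoid (hvw : v ≠ w) (h : (avoid G Z).Reachable v w) : v ∉ Z := by
  obtain ⟨p⟩ := h
  cases p with
  | nil => exact absurd rfl hvw
  | cons h _ => exact h.2.1

lemma avoid_le_exchange (G : SimpleGraph V) (v w : V) (Z : Finset V) :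
    avoid G Z ≤ exchange G v w Z := fun p q h => by
  simp [exchange_adj, h.2.1, h.2.2, h.1]

lemma exchange_adj_of_mem (hv : v ∉ Z) (hw : w ∉ Z) {z : V} (hz : z ∈ Z) (q : V) :
    (exchange G v w Z).Adj z q ↔ G.Adj z (Equiv.swap v w q) := by
  simp [exchange_adj, hz, Equiv.swap_apply_of_ne_of_ne (ne_of_mem_of_not_mem hz hv)
    (ne_of_mem_of_not_mem hz hw)]

/-- An edge from `z ∈ Z` to `v` is replaced by an edge to `w`, from which `v` is reached without
using `Z`. -/
lemma exchange_connected (hG : G.Connected) (hvw : v ≠ w) (hr : (avoid G Z).Reachable v w) :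
    (exchange G v w Z).Connected := by
  have hv := notMem_of_reachable_avoid hvw hr
  have hw := notMem_of_reachable_avoid hvw.symm hr.symm
  have hr' := hr.mono (avoid_le_exchange G v w Z)
  have hmem {z q : V} (hz : z ∈ Z) (h : G.Adj z q) : (exchange G v w Z).Reachable z q := by
    have hadj : (exchange G v w Z).Adj z (Equiv.swap v w q) := by
      rwa [exchange_adj_of_mem hv hw hz, Equiv.swap_apply_self]
    refine hadj.reachable.trans ?_
    rcases eq_or_ne q v with rfl | hqv
    · simpa using hr'.symm
    rcases eq_or_ne q w with rfl | hqw
    · simpa using hr'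
    · rw [Equiv.swap_apply_of_ne_of_ne hqv hqw]
  have : Nonempty V := ⟨v⟩
  refine ⟨fun p q => forall_of_forall_adj hG.preconnected
    (P := (exchange G v w Z).Reachable p) (fun a b hab hpa => hpa.trans ?_) .rfl q⟩
  by_cases ha : a ∈ Z
  · exact hmem ha hab
  by_cases hb : b ∈ Z
  · exact (hmem hb hab.symm).symm
  · exact (avoid_le_exchange G v w Z ⟨hab, ha, hb⟩ : (exchange G v w Z).Adj a b).reachable

/-- Which way `z` moves in an exchange at `v`, `w`: `1` if it is adjacent to `v` only, `-1` if it is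
adjacent to `w` only, and `0` otherwise. -/
def branchSign (G : SimpleGraph V) (v w z : V) : ℝ := G.adjMatrix ℝ v z - G.adjMatrix ℝ w z

/-- The signs of `branchSign`, restricted to `Z`. -/
def exchangeSign (G : SimpleGraph V) (v w : V) (Z : Finset V) (z : V) : ℝ :=
  if z ∈ Z then branchSign G v w z else 0

lemma adjMatrix_exchange (hvw : v ≠ w) (hv : v ∉ Z) (hw : w ∉ Z) :
    (exchange G v w Z).adjMatrix ℝ = G.adjMatrix ℝ
      + vecMulVec (exchangeSign G v w Z) (Pi.single w 1 - Pi.single v 1)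
      + vecMulVec (Pi.single w 1 - Pi.single v 1) (exchangeSign G v w Z) := by
  ext p q
  simp only [Matrix.add_apply, vecMulVec_apply, Pi.sub_apply, Pi.single_apply,
    SimpleGraph.adjMatrix_apply, exchangeSign, branchSign, exchange_adj, Equiv.swap_apply_def]
  grind [SimpleGraph.adj_comm]

variable [Fintype V]

lemma exchangeSign_dotProduct (G : SimpleGraph V) (v w : V) (Z : Finset V) (F : V → ℝ) :
    exchangeSign G v w Z ⬝ᵥ F = ∑ z ∈ Z, branchSign G v w z * F z := by
  simp [dotProduct, exchangeSign, ite_mul]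

lemma adjMatrix_exchange_mulVec (hvw : v ≠ w) (hv : v ∉ Z) (hw : w ∉ Z) (F : V → ℝ) (u : V) :
    ((exchange G v w Z).adjMatrix ℝ *ᵥ F) u = (G.adjMatrix ℝ *ᵥ F) u
      + exchangeSign G v w Z u * (F w - F v)
      + (Pi.single w 1 - Pi.single v 1 : V → ℝ) u * ∑ z ∈ Z, branchSign G v w z * F z := by
  rw [adjMatrix_exchange hvw hv hw, add_mulVec, add_mulVec, vecMulVec_mulVec, vecMulVec_mulVec,
    exchangeSign_dotProduct]
  simp [sub_dotProduct]

lemma degree_exchange (hvw : v ≠ w) (hv : v ∉ Z) (hw : w ∉ Z) (u : V) :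
    ((exchange G v w Z).degree u : ℝ) = G.degree u
      + (Pi.single w 1 - Pi.single v 1 : V → ℝ) u * ∑ z ∈ Z, branchSign G v w z := by
  simpa using adjMatrix_exchange_mulVec (G := G) hvw hv hw 1 u

lemma lapApply_exchange (hvw : v ≠ w) (hv : v ∉ Z) (hw : w ∉ Z) (f : V → ℝ) (u : V) :
    lapApply (exchange G v w Z) f u = lapApply G f u - exchangeSign G v w Z u * (f w - f v)
      + (Pi.single w 1 - Pi.single v 1 : V → ℝ) u
        * ∑ z ∈ Z, branchSign G v w z * (f u - f z) := by
  have h := adjMatrix_exchange_mulVec (G := G) hvw hv hw f u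
  simp only [SimpleGraph.adjMatrix_mulVec_apply] at h
  rw [lapApply, h, degree_exchange hvw hv hw, lapApply]
  simp only [mul_sub, sum_sub_distrib, ← sum_mul]
  ring

lemma lapApply_exchange_left (hvw : v ≠ w) (hv : v ∉ Z) (hw : w ∉ Z) (f : V → ℝ) :
    lapApply (exchange G v w Z) f v
      = lapApply G f v - ∑ z ∈ Z, branchSign G v w z * (f v - f z) := by
  simp [lapApply_exchange hvw hv hw, exchangeSign, hv, hvw, sub_eq_add_neg]

lemma quadForm_exchange (hvw : v ≠ w) (hv : v ∉ Z) (hw : w ∉ Z) (f : V → ℝ) :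
    quadForm (exchange G v w Z) f = quadForm G f
      + (f w - f v) * ∑ z ∈ Z, branchSign G v w z * (f w + f v - 2 * f z) := by
  have hlap : lapApply (exchange G v w Z) f = lapApply G f - (f w - f v) • exchangeSign G v w Z
      + fun u => (Pi.single w 1 - Pi.single v 1 : V → ℝ) u
        * ∑ z ∈ Z, branchSign G v w z * (f u - f z) := by
    funext u
    simp [lapApply_exchange hvw hv hw, mul_comm]
  rw [quadForm_eq_dotProduct, quadForm_eq_dotProduct, hlap, dotProduct_add, dotProduct_sub,
    dotProduct_smul, dotProduct_comm f (exchangeSign G v w Z), exchangeSign_dotProduct]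
  have hsplit : (f ⬝ᵥ fun u => (Pi.single w 1 - Pi.single v 1 : V → ℝ) u
        * ∑ z ∈ Z, branchSign G v w z * (f u - f z))
      = f w * ∑ z ∈ Z, branchSign G v w z * (f w - f z)
        - f v * ∑ z ∈ Z, branchSign G v w z * (f v - f z) := by
    simp only [dotProduct, Pi.sub_apply, Pi.single_apply, sub_mul, ite_mul, one_mul, zero_mul,
      mul_sub (f _), sum_sub_distrib, mul_ite, mul_zero, sum_ite_eq', mem_univ, if_true]
  rw [hsplit]
  simp only [smul_eq_mul, mul_sub, mul_add, sum_sub_distrib, sum_add_distrib, ← sum_mul,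
    mul_left_comm _ (2 : ℝ), ← mul_sum]
  ring

lemma degree_exchange_eq_degree (hvw : v ≠ w) (hv : v ∉ Z) (hw : w ∉ Z)
    (hsum : ∑ z ∈ Z, branchSign G v w z = 0) (u : V) :
    (exchange G v w Z).degree u = G.degree u := by
  have h := degree_exchange (G := G) hvw hv hw u
  rw [hsum, mul_zero, add_zero] at h
  exact_mod_cast h

lemma degree_exchange_eq_degree_swap (hvw : v ≠ w) (hv : v ∉ Z) (hw : w ∉ Z)
    (hsum : ∑ z ∈ Z, branchSign G v w z = (G.degree v : ℝ) - G.degree w) (u : V) :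
    (exchange G v w Z).degree u = G.degree (Equiv.swap v w u) := by
  rw [← Nat.cast_inj (R := ℝ), degree_exchange hvw hv hw, hsum]
  rcases eq_or_ne u v with rfl | huv
  · rw [Equiv.swap_apply_left]
    simp [hvw]
  rcases eq_or_ne u w with rfl | huw
  · rw [Equiv.swap_apply_right]
    simp [huv]
  · rw [Equiv.swap_apply_of_ne_of_ne huv huw]
    simp [huv, huw]

lemma IsInterior.swap {u : V} (hv : IsInterior G v) (hw : IsInterior G w) (hu : IsInterior G u) :
    IsInterior G (Equiv.swap v w u) := by
  rw [Equiv.swap_apply_def]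
  split_ifs <;> assumption

/-- `hE` says that the exchange does not increase the energy of `f`; up to sign, the last sum is the
change of the Laplacian of `f` at `v`. -/
lemma IsFaberKrahn.sum_branchSign_mul_eq_zero {f : V → ℝ} (hmin : IsFaberKrahn G)
    (hG : IsTreeWithBoundary G) (hf : IsPerron G f) (hvw : v ≠ w) (hr : (avoid G Z).Reachable v w)
    (hv : IsInterior G v) (hw : IsInterior G w)
    (hdeg : ∑ z ∈ Z, branchSign G v w z = 0 ∨
      ∑ z ∈ Z, branchSign G v w z = (G.degree v : ℝ) - G.degree w)
    (hE : (f w - f v) * ∑ z ∈ Z, branchSign G v w z * (f w + f v - 2 * f z) ≤ 0) :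
    ∑ z ∈ Z, branchSign G v w z * (f v - f z) = 0 := by
  have hvZ := notMem_of_reachable_avoid hvw hr
  have hwZ := notMem_of_reachable_avoid hvw.symm hr.symm
  have hconn := exchange_connected hG.1.connected hvw hr
  have hquad : quadForm (exchange G v w Z) f ≤ quadForm G f := by
    rw [quadForm_exchange hvw hvZ hwZ]
    linarith
  have hlap : lapApply (exchange G v w Z) f v = lapApply G f v := by
    rcases hdeg with hdeg | hdeg
    · exact hmin.lapApply_eq hG hf hconn (Equiv.refl V)
        (degree_exchange_eq_degree hvw hvZ hwZ hdeg) (fun _ h => h) hquad hv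
    · exact hmin.lapApply_eq hG hf hconn (Equiv.swap v w)
        (degree_exchange_eq_degree_swap hvw hvZ hwZ hdeg) (fun _ => hv.swap hw) hquad hv
  rw [lapApply_exchange_left hvw hvZ hwZ] at hlap
  linarith

end Exchange

section Rooted

variable {V : Type*} {G : SimpleGraph V} {r u v w : V}

lemma IsChild.ne_root (h : IsChild G r v w) : w ≠ r := by
  rintro rfl
  simpa using h.2

lemma exists_isChild (hG : G.Connected) (hw : w ≠ r) : ∃ v, IsChild G r v w := by
  obtain ⟨p, hp⟩ := hG.exists_walk_length_eq_dist w r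
  cases p with
  | nil => exact absurd rfl hw
  | @cons _ v _ h q =>
    refine ⟨v, h.symm, ?_⟩
    have hle : G.dist v r ≤ q.length := SimpleGraph.dist_le q
    have htri : G.dist w r ≤ G.dist w v + G.dist v r := hG.dist_triangle
    rw [SimpleGraph.dist_eq_one_iff_adj.2 h] at htri
    rw [SimpleGraph.Walk.length_cons] at hp
    rw [G.dist_comm, G.dist_comm (u := r)]
    omega

lemma IsChild.eq (hG : G.IsTree) (hu : IsChild G r u w) (hv : IsChild G r v w) : u = v := by
  have hpath {x} (hx : IsChild G r x w) :
      ∃ p : G.Walk r x, (p.concat hx.1).IsPath := by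
    obtain ⟨p, hp⟩ := hG.connected.exists_walk_length_eq_dist r x
    exact ⟨p, SimpleGraph.Walk.isPath_of_length_eq_dist _
      (by rw [SimpleGraph.Walk.length_concat, hp, hx.2])⟩
  obtain ⟨p, hp⟩ := hpath hu
  obtain ⟨q, hq⟩ := hpath hv
  have hpq := congrArg SimpleGraph.Walk.penultimate ((hG.existsUnique_path r w).unique hp hq)
  simpa using hpq

lemma isChild_or_isChild_of_adj (hG : G.IsTree) (r : V) (h : G.Adj u v) :
    IsChild G r u v ∨ IsChild G r v u :=
  (hG.dist_eq_dist_add_one_of_adj r h).symm.imp (⟨h, ·⟩) (⟨h.symm, ·⟩)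

lemma dist_le_dist_add_one_of_adj (hG : G.IsTree) (r : V) (h : G.Adj u v) :
    G.dist r v ≤ G.dist r u + 1 := by
  rcases hG.dist_eq_dist_add_one_of_adj r h with h | h <;> omega

/-- The parent of `v` in the tree `G` rooted at `r`; the root is its own parent. -/
def parent (G : SimpleGraph V) (r v : V) : V :=
  if h : ∃ u, IsChild G r u v then h.choose else v

@[simp] lemma parent_root (G : SimpleGraph V) (r : V) : parent G r r = r :=
  dif_neg fun ⟨_, h⟩ => h.ne_root rfl

lemma isChild_parent (hG : G.Connected) (hv : v ≠ r) : IsChild G r (parent G r v) v := by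
  rw [parent, dif_pos (exists_isChild hG hv)]
  exact (exists_isChild hG hv).choose_spec

lemma adj_parent (hG : G.Connected) (hv : v ≠ r) : G.Adj (parent G r v) v :=
  (isChild_parent hG hv).1

lemma dist_eq_dist_parent_add_one (hG : G.Connected) (hv : v ≠ r) :
    G.dist r v = G.dist r (parent G r v) + 1 :=
  (isChild_parent hG hv).2

lemma IsChild.parent_eq (hG : G.IsTree) (h : IsChild G r v w) : parent G r w = v :=
  (isChild_parent hG.connected h.ne_root).eq hG h

lemma isChild_iff (hG : G.IsTree) : IsChild G r v w ↔ w ≠ r ∧ parent G r w = v :=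
  ⟨fun h => ⟨h.ne_root, h.parent_eq hG⟩, fun ⟨hw, h⟩ => h ▸ isChild_parent hG.connected hw⟩

lemma adj_iff_parent_eq (hG : G.IsTree) :
    G.Adj u v ↔ (v ≠ r ∧ parent G r v = u) ∨ (u ≠ r ∧ parent G r u = v) := by
  rw [← isChild_iff hG, ← isChild_iff hG]
  exact ⟨isChild_or_isChild_of_adj hG r, fun h => h.elim (·.1) (·.1.symm)⟩

lemma dist_parent (hG : G.Connected) (r v : V) :
    G.dist r (parent G r v) = G.dist r v - 1 := by
  obtain rfl | hv := eq_or_ne v r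
  · simp
  · rw [dist_eq_dist_parent_add_one hG hv, Nat.add_sub_cancel]

lemma dist_iterate_parent (hG : G.Connected) (r v : V) (k : ℕ) :
    G.dist r ((parent G r)^[k] v) = G.dist r v - k := by
  induction k with
  | zero => rfl
  | succ k ih => rw [Function.iterate_succ_apply', dist_parent hG, ih, Nat.sub_sub]

lemma iterate_parent_eq_root (hG : G.Connected) {k : ℕ} (hk : G.dist r v ≤ k) :
    (parent G r)^[k] v = r := by
  rw [eq_comm, ← hG.dist_eq_zero_iff, dist_iterate_parent hG, Nat.sub_eq_zero_of_le hk]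

lemma nonempty_iso_of_parent_comm {W : Type*} {G' : SimpleGraph W} {r' : W} (hG : G.IsTree)
    (hG' : G'.IsTree) (φ : V ≃ W) (hroot : φ r = r')
    (hφ : ∀ v, φ (parent G r v) = parent G' r' (φ v)) : Nonempty (G ≃g G') := by
  subst hroot
  refine ⟨⟨φ, fun {u v} => ?_⟩⟩
  simp only [adj_iff_parent_eq (r := φ r) hG', adj_iff_parent_eq (r := r) hG, ← hφ,
    φ.injective.eq_iff, ne_eq]

/-- `u` is an ancestor of `v`, or `v` itself, in the tree `G` rooted at `r`. -/
def IsAncestor (G : SimpleGraph V) (r u v : V) : Prop := ∃ k, (parent G r)^[k] v = u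

namespace IsAncestor

protected lemma refl (G : SimpleGraph V) (r v : V) : IsAncestor G r v v := ⟨0, rfl⟩

lemma of_parent (h : IsAncestor G r u (parent G r v)) : IsAncestor G r u v :=
  let ⟨k, hk⟩ := h
  ⟨k + 1, hk⟩

lemma iterate_eq (hG : G.Connected) (h : IsAncestor G r u v) :
    (parent G r)^[G.dist r v - G.dist r u] v = u := by
  obtain ⟨k, rfl⟩ := h
  rw [dist_iterate_parent hG]
  obtain hk | hk := le_total k (G.dist r v)
  · rw [Nat.sub_sub_self hk]
  · rw [iterate_parent_eq_root hG hk, iterate_parent_eq_root hG (by omega)]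

lemma dist_le (hG : G.Connected) (h : IsAncestor G r u v) : G.dist r u ≤ G.dist r v := by
  obtain ⟨k, rfl⟩ := h
  rw [dist_iterate_parent hG]
  exact Nat.sub_le _ _

lemma eq_of_dist_le (hG : G.Connected) (h : IsAncestor G r u v) (hd : G.dist r v ≤ G.dist r u) :
    u = v := by
  simpa [Nat.sub_eq_zero_of_le hd] using (h.iterate_eq hG).symm

end IsAncestor

lemma not_isAncestor_parent (hG : G.Connected) (hv : v ≠ r) :
    ¬ IsAncestor G r v (parent G r v) := fun h => by
  have := h.dist_le hG
  have := dist_eq_dist_parent_add_one hG hv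
  omega

lemma reachable_avoid_iterate_parent (hG : G.Connected) {Z : Finset V} {k : ℕ}
    (h : ∀ j ≤ k, (parent G r)^[j] v ∉ Z) :
    (avoid G Z).Reachable v ((parent G r)^[k] v) := by
  induction k with
  | zero => rfl
  | succ k ih =>
    refine (ih fun j hj => h j (hj.trans k.le_succ)).trans ?_
    have hk := h k k.le_succ
    have hk1 := h (k + 1) le_rfl
    rw [Function.iterate_succ_apply'] at hk1 ⊢
    obtain hr | hr := eq_or_ne ((parent G r)^[k] v) r
    · rw [hr, parent_root]
    · have hadj : (avoid G Z).Adj _ _ := ⟨(adj_parent hG hr).symm, hk, hk1⟩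
      exact hadj.reachable

lemma reachable_avoid_of_forall_not_isAncestor (hG : G.Connected) {Z : Finset V}
    (hv : ∀ z ∈ Z, ¬ IsAncestor G r z v) (hw : ∀ z ∈ Z, ¬ IsAncestor G r z w) :
    (avoid G Z).Reachable v w := by
  have hroot {x} (hx : ∀ z ∈ Z, ¬ IsAncestor G r z x) : (avoid G Z).Reachable x r := by
    rw [← iterate_parent_eq_root hG (le_refl (G.dist r x))]
    exact reachable_avoid_iterate_parent hG fun j _ hj => hx _ hj ⟨j, rfl⟩
  exact (hroot hv).trans (hroot hw).symm

lemma IsAncestor.trans (huv : IsAncestor G r u v) (hvw : IsAncestor G r v w) :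
    IsAncestor G r u w := by
  obtain ⟨k, rfl⟩ := huv
  obtain ⟨l, rfl⟩ := hvw
  exact ⟨k + l, Function.iterate_add_apply _ _ _ _⟩

lemma IsAncestor.reachable_avoid (hG : G.Connected) {Z : Finset V} (h : IsAncestor G r u v)
    (hZ : ∀ z ∈ Z, G.dist r z < G.dist r u ∨ G.dist r v < G.dist r z) :
    (avoid G Z).Reachable u v := by
  have hle := h.dist_le hG
  have hreach : (avoid G Z).Reachable v ((parent G r)^[G.dist r v - G.dist r u] v) :=
    reachable_avoid_iterate_parent hG fun j hj hmem => by
      have := hZ _ hmem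
      rw [dist_iterate_parent hG] at this
      omega
  rw [h.iterate_eq hG] at hreach
  exact hreach.symm

variable [Fintype V]

/-- The children of `v` in the tree `G` rooted at `r`. -/
def children (G : SimpleGraph V) (r v : V) : Finset V := univ.filter (IsChild G r v)

@[simp] lemma mem_children : w ∈ children G r v ↔ IsChild G r v w := by simp [children]

lemma degree_eq_card_children_add_one (hG : G.IsTree) (hv : v ≠ r) :
    G.degree v = #(children G r v) + 1 := by
  have hparent := isChild_parent hG.connected hv
  have hnbr : G.neighborFinset v = insert (parent G r v) (children G r v) := by
    ext w
    rw [SimpleGraph.mem_neighborFinset, mem_insert, mem_children]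
    refine ⟨fun h => (isChild_or_isChild_of_adj hG r h).symm.imp_left (·.eq hG hparent), ?_⟩
    rintro (rfl | h)
    exacts [hparent.1.symm, h.1]
  rw [← G.card_neighborFinset_eq_degree, hnbr, card_insert_of_notMem]
  intro h
  have := (mem_children.1 h).2
  have := hparent.2
  omega

lemma degree_root (hG : G.IsTree) (r : V) : G.degree r = #(children G r r) := by
  rw [← G.card_neighborFinset_eq_degree]
  congr 1
  ext w
  rw [SimpleGraph.mem_neighborFinset, mem_children]
  exact ⟨fun h => (isChild_or_isChild_of_adj hG r h).resolve_right fun h => h.ne_root rfl, (·.1)⟩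

lemma card_filter_isAncestor_children_le_one (hG : G.Connected) :
    #{x ∈ children G r v | IsAncestor G r x w} ≤ 1 := by
  refine card_le_one.2 fun x hx y hy => ?_
  rw [mem_filter, mem_children] at hx hy
  rw [← hx.2.iterate_eq hG, ← hy.2.iterate_eq hG, hx.1.2, hy.1.2]

lemma degree_le_card_filter_not_isAncestor_add_two (hG : G.IsTree) :
    G.degree v ≤ #{x ∈ children G r v | ¬ IsAncestor G r x w} + 2 := by
  have hle : #{x ∈ children G r v | IsAncestor G r x w} ≤ 1 :=
    card_filter_isAncestor_children_le_one hG.connected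
  have hsplit := card_filter_add_card_filter_not (s := children G r v) (IsAncestor G r · w)
  obtain rfl | hv := eq_or_ne v r
  · rw [degree_root hG]
    omega
  · rw [degree_eq_card_children_add_one hG hv]
    omega

lemma IsChild.isInterior (hG : G.IsTree) (hr : IsInterior G r) (h : IsChild G r v w) :
    IsInterior G v := by
  obtain rfl | hv := eq_or_ne v r
  · exact hr
  have : 0 < #(children G r v) := card_pos.2 ⟨w, mem_children.2 h⟩
  rw [IsInterior, degree_eq_card_children_add_one hG hv]
  omega

lemma IsAncestor.isInterior (hG : G.IsTree) (hr : IsInterior G r) (h : IsAncestor G r u v)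
    (huv : u ≠ v) : IsInterior G u := by
  obtain ⟨_ | k, rfl⟩ := h
  · exact absurd rfl huv
  rw [Function.iterate_succ_apply']
  obtain hk | hk := eq_or_ne ((parent G r)^[k] v) r
  · rwa [hk, parent_root]
  · exact (isChild_parent hG.connected hk).isInterior hG hr

lemma IsInterior.exists_isChild (hG : G.IsTree) (r : V) (hv : IsInterior G v) :
    ∃ w, IsChild G r v w := by
  simp_rw [← mem_children]
  rw [← Finset.Nonempty, ← card_pos]
  unfold IsInterior at hv
  obtain rfl | hvr := eq_or_ne v r
  · rw [degree_root hG] at hv; omega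
  · rw [degree_eq_card_children_add_one hG hvr] at hv; omega

end Rooted

section RootedMinimizer

variable {V : Type*} [Fintype V]

/-- A minimizing tree `G` together with a positive first eigenfunction `f` and a vertex `r`, the
root, at which `f` is maximal. -/
structure IsRootedMinimizer (G : SimpleGraph V) (f : V → ℝ) (r : V) : Prop where
  isTreeWithBoundary : IsTreeWithBoundary G
  isFaberKrahn : IsFaberKrahn G
  isPerron : IsPerron G f
  le_root : ∀ v, f v ≤ f r

lemma IsFaberKrahn.exists_isRootedMinimizer {G : SimpleGraph V} (hG : IsTreeWithBoundary G)
    (hmin : IsFaberKrahn G) : ∃ f r, IsRootedMinimizer G f r := by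
  obtain ⟨v, hv⟩ := hG.2.1
  obtain ⟨f, hf⟩ := exists_isPerron hG.1.connected hv
  have : Nonempty V := ⟨v⟩
  obtain ⟨r, hr⟩ := Finite.exists_max f
  exact ⟨f, r, hG, hmin, hf, hr⟩

namespace IsRootedMinimizer

variable {G : SimpleGraph V} {f : V → ℝ} {r v w : V}

lemma isTree (h : IsRootedMinimizer G f r) : G.IsTree := h.isTreeWithBoundary.1

lemma connected (h : IsRootedMinimizer G f r) : G.Connected := h.isTree.connected

lemma nonneg (h : IsRootedMinimizer G f r) (v : V) : 0 ≤ f v :=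
  (h.isTreeWithBoundary.isBoundary_or_isInterior v).elim (fun hv => (h.isPerron.eq_zero hv).ge)
    fun hv => (h.isPerron.pos v hv).le

lemma isInterior_of_pos (h : IsRootedMinimizer G f r) (hv : 0 < f v) : IsInterior G v :=
  (h.isTreeWithBoundary.isBoundary_or_isInterior v).resolve_left
    fun hb => hv.ne' (h.isPerron.eq_zero hb)

lemma isInterior_root (h : IsRootedMinimizer G f r) : IsInterior G r := by
  obtain ⟨u, hu⟩ := h.isTreeWithBoundary.2.1
  exact h.isInterior_of_pos ((h.isPerron.pos u hu).trans_le (h.le_root u))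

lemma isInterior_parent (h : IsRootedMinimizer G f r) (hv : v ≠ r) :
    IsInterior G (parent G r v) :=
  (isChild_parent h.connected hv).isInterior h.isTree h.isInterior_root

/-- Replace the edges `xy`, `ab` of a path `x, y, …, a, b` by `xa`, `yb`. -/
lemma lt_of_switch (h : IsRootedMinimizer G f r) {x y a b : V} (hxy : G.Adj x y) (hab : G.Adj a b)
    (hxa : ¬ G.Adj x a) (hyb : ¬ G.Adj y b) (hreach : (avoid G {x, b}).Reachable y a)
    (hy : IsInterior G y) (ha : IsInterior G a) (hlt : f b < f x) : f a < f y := by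
  by_contra! hle
  have hxb : x ≠ b := by rintro rfl; exact hxa hab.symm
  have hya : y ≠ a := by rintro rfl; exact hxa hxy
  have hx : branchSign G y a x = 1 := by simp [branchSign, hxy.symm, G.adj_comm a x, hxa]
  have hb : branchSign G y a b = -1 := by simp [branchSign, hab, hyb]
  have hsum := h.isFaberKrahn.sum_branchSign_mul_eq_zero h.isTreeWithBoundary h.isPerron hya
    hreach hy ha
    (Or.inl (by rw [sum_pair hxb, hx, hb, add_neg_cancel]))
    (by rw [sum_pair hxb, hx, hb]; nlinarith)
  rw [sum_pair hxb, hx, hb] at hsum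
  linarith

lemma exists_isAncestor_isChild_lt (h : IsRootedMinimizer G f r) (hw : 0 < f w) :
    ∃ a b, IsAncestor G r w a ∧ IsChild G r a b ∧ f w ≤ f a ∧ f b < f w := by
  obtain ⟨a, ha, hmax⟩ := exists_max_image
    (univ.filter fun a => IsAncestor G r w a ∧ f w ≤ f a) (G.dist r)
    ⟨w, by simp [IsAncestor.refl]⟩
  simp only [mem_filter, mem_univ, true_and] at ha hmax
  obtain ⟨b, hab⟩ := (h.isInterior_of_pos (hw.trans_le ha.2)).exists_isChild h.isTree r
  refine ⟨a, b, ha.1, hab, ha.2, lt_of_not_ge fun hle => ?_⟩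
  have hanc : IsAncestor G r w b := .of_parent (by rw [hab.parent_eq h.isTree]; exact ha.1)
  have := hmax b ⟨hanc, hle⟩
  have := hab.2
  omega

lemma exists_isAncestor_lt_le_parent (h : IsRootedMinimizer G f r) (hw : f (parent G r w) < f w) :
    ∃ y, y ≠ r ∧ y ≠ w ∧ IsAncestor G r y w ∧ f y < f w ∧ f w ≤ f (parent G r y) := by
  have hroot : ∃ n, f w ≤ f ((parent G r)^[n + 1] w) :=
    ⟨G.dist r w, by rw [iterate_parent_eq_root h.connected (Nat.le_succ _)]; exact h.le_root w⟩
  obtain ⟨n, hn, hn1⟩ := Nat.exists_not_and_succ_of_not_zero_of_exists hw.not_ge hroot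
  rw [not_le] at hn
  rw [Function.iterate_succ_apply'] at hn1
  refine ⟨_, ?_, ?_, ⟨n + 1, rfl⟩, hn, hn1⟩
  · intro hr
    rw [hr] at hn
    exact hn.not_ge (h.le_root w)
  · intro hw'
    rw [hw'] at hn
    exact hn.false

lemma le_parent (h : IsRootedMinimizer G f r) (w : V) : f w ≤ f (parent G r w) := by
  by_contra! hlt
  obtain ⟨y, hyr, hyw, hya, hlt', hle⟩ := h.exists_isAncestor_lt_le_parent hlt
  obtain ⟨a, b, hwa, hab, hwa', hbw⟩ :=
    h.exists_isAncestor_isChild_lt ((h.nonneg _).trans_lt hlt)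
  have hdy := dist_eq_dist_parent_add_one h.connected hyr
  have hdyw : G.dist r y < G.dist r w :=
    lt_of_not_ge fun hd => hyw (hya.eq_of_dist_le h.connected hd)
  have hdwa := hwa.dist_le h.connected
  have hdab := hab.2
  refine (h.lt_of_switch (adj_parent h.connected hyr) hab.1 ?_ ?_ ?_ ?_ ?_
    (hbw.trans_le hle)).not_gt (hlt'.trans_le hwa')
  · intro hadj
    have := dist_le_dist_add_one_of_adj h.isTree r hadj
    omega
  · intro hadj
    have := dist_le_dist_add_one_of_adj h.isTree r hadj
    omega
  · refine (hya.trans hwa).reachable_avoid h.connected fun z hz => ?_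
    rcases mem_insert.1 hz with rfl | hz
    · omega
    · rw [mem_singleton.1 hz]
      omega
  · exact hya.isInterior h.isTree h.isInterior_root hyw
  · exact hab.isInterior h.isTree h.isInterior_root

lemma le_of_isAncestor (h : IsRootedMinimizer G f r) (hvw : IsAncestor G r v w) : f w ≤ f v := by
  obtain ⟨k, rfl⟩ := hvw
  induction k with
  | zero => rfl
  | succ k ih =>
    rw [Function.iterate_succ_apply']
    exact ih.trans (h.le_parent _)

lemma le_of_parent_le (h : IsRootedMinimizer G f r) (hv : v ≠ r) (hw : w ≠ r)
    (hne : parent G r v ≠ parent G r w) (hvw : ¬ IsAncestor G r v (parent G r w))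
    (hwv : ¬ IsAncestor G r w (parent G r v)) (hle : f (parent G r w) ≤ f (parent G r v)) :
    f w ≤ f v := by
  have hnadj {u x : V} (hne : parent G r u ≠ parent G r x)
      (hanc : ¬ IsAncestor G r u (parent G r x)) : ¬ G.Adj u (parent G r x) := fun hadj =>
    (isChild_or_isChild_of_adj h.isTree r hadj).elim
      (fun hc => hanc ⟨1, hc.parent_eq h.isTree⟩) fun hc => hne (hc.parent_eq h.isTree)
  by_contra! hlt
  refine (h.lt_of_switch (adj_parent h.connected hw).symm (adj_parent h.connected hv)
    (hnadj hne.symm hwv) (fun hadj => hnadj hne hvw hadj.symm) ?_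
    (h.isInterior_parent hw) (h.isInterior_parent hv) hlt).not_ge hle
  refine reachable_avoid_of_forall_not_isAncestor (r := r) h.connected ?_ ?_ <;>
    simp only [mem_insert, mem_singleton, forall_eq_or_imp, forall_eq]
  exacts [⟨not_isAncestor_parent h.connected hw, hvw⟩, ⟨hwv, not_isAncestor_parent h.connected hv⟩]

lemma le_of_dist_lt (h : IsRootedMinimizer G f r) (hlt : G.dist r v < G.dist r w) : f w ≤ f v := by
  induction hk : G.dist r v generalizing v w with
  | zero =>
    rw [← h.connected.dist_eq_zero_iff.1 hk]
    exact h.le_root w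
  | succ k ih =>
    have hv : v ≠ r := by rintro rfl; simp at hk
    have hw : w ≠ r := by rintro rfl; simp at hlt
    have hdv := dist_eq_dist_parent_add_one h.connected hv
    have hdw := dist_eq_dist_parent_add_one h.connected hw
    by_cases hvw : IsAncestor G r v (parent G r w)
    · exact h.le_of_isAncestor hvw.of_parent
    refine h.le_of_parent_le hv hw (fun heq => ?_) hvw (fun hwv => ?_)
      (ih (by omega) (by omega))
    · rw [heq] at hdv
      omega
    · have := hwv.dist_le h.connected
      omega

lemma le_of_parent_le_of_dist_eq (h : IsRootedMinimizer G f r) (hv : v ≠ r) (hw : w ≠ r)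
    (hne : parent G r v ≠ parent G r w) (hd : G.dist r v = G.dist r w)
    (hle : f (parent G r w) ≤ f (parent G r v)) : f w ≤ f v := by
  have hdv := dist_eq_dist_parent_add_one h.connected hv
  have hdw := dist_eq_dist_parent_add_one h.connected hw
  refine h.le_of_parent_le hv hw hne (fun hvw => ?_) (fun hwv => ?_) hle
  · have := hvw.dist_le h.connected
    omega
  · have := hwv.dist_le h.connected
    omega

lemma exists_isChild_lt (h : IsRootedMinimizer G f r) (hv : IsInterior G v) :
    ∃ u, IsChild G r v u ∧ f u < f v := by
  obtain ⟨b, hb⟩ := h.isTreeWithBoundary.2.2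
  have hpos := mul_pos (h.isPerron.eigenpair.eigenvalue_pos h.connected hv hb) (h.isPerron.pos v hv)
  by_contra! hle
  have hnbr : ∀ u ∈ G.neighborFinset v, f v ≤ f u := fun u hu => by
    rcases isChild_or_isChild_of_adj h.isTree r ((G.mem_neighborFinset v u).1 hu) with hc | hc
    · exact hle u hc
    · rw [← hc.parent_eq h.isTree]
      exact h.le_parent v
  have hsum := card_nsmul_le_sum _ _ _ hnbr
  rw [← h.isPerron.lapApply_eq hv, lapApply] at hpos
  rw [SimpleGraph.card_neighborFinset_eq_degree, nsmul_eq_mul] at hsum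
  linarith

/-- Move the branches with roots in `Z` from `v` to `w`, which swaps the degrees of `v` and `w`. -/
lemma eq_of_shift (h : IsRootedMinimizer G f r) {Z : Finset V} (hvw : v ≠ w) (hv : IsInterior G v)
    (hw : IsInterior G w) (hchild : ∀ z ∈ Z, IsChild G r v z)
    (hanc : ∀ z ∈ Z, ¬ IsAncestor G r z w) (hcard : #Z + G.degree w = G.degree v)
    (hle : f w ≤ f v) (hZ : ∀ z ∈ Z, f z ≤ f w) : ∀ z ∈ Z, f z = f v := by
  have hsign : ∀ z ∈ Z, branchSign G v w z = 1 := fun z hz => by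
    have hwz : ¬ G.Adj w z := fun hadj =>
      (isChild_or_isChild_of_adj h.isTree r hadj).elim
        (fun hc => hvw ((hchild z hz).eq h.isTree hc))
        fun hc => hanc z hz ⟨1, hc.parent_eq h.isTree⟩
    simp [branchSign, (hchild z hz).1, hwz]
  have hsum (F : V → ℝ) : ∑ z ∈ Z, branchSign G v w z * F z = ∑ z ∈ Z, F z :=
    sum_congr rfl fun z hz => by rw [hsign z hz, one_mul]
  have hreach : (avoid G Z).Reachable v w :=
    reachable_avoid_of_forall_not_isAncestor h.connected (fun z hz hzv => by
      have := hzv.dist_le h.connected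
      have := (hchild z hz).2
      omega) hanc
  have hzero := h.isFaberKrahn.sum_branchSign_mul_eq_zero h.isTreeWithBoundary h.isPerron hvw
    hreach hv hw
    (Or.inr (by simp [sum_congr rfl hsign, ← hcard]))
    (by
      rw [hsum]
      exact mul_nonpos_of_nonpos_of_nonneg (by linarith)
        (sum_nonneg fun z hz => by linarith [hZ z hz]))
  rw [hsum, sum_eq_zero_iff_of_nonneg fun z hz => by linarith [hZ z hz]] at hzero
  exact fun z hz => (sub_eq_zero.1 (hzero z hz)).symm

lemma degree_le_of_forall_isChild_le (h : IsRootedMinimizer G f r) (hvw : v ≠ w)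
    (hv : IsInterior G v) (hw : IsInterior G w) (hle : f w ≤ f v)
    (hchild : ∀ x, IsChild G r v x → f x ≤ f w) : G.degree v ≤ G.degree w := by
  by_contra! hdeg
  set B := {x ∈ children G r v | ¬ IsAncestor G r x w}
  have hBcard : G.degree v ≤ #B + 2 := degree_le_card_filter_not_isAncestor_add_two h.isTree
  have hw2 : 2 ≤ G.degree w := hw
  obtain ⟨u, huB, hu⟩ : ∃ u ∈ B, f u < f v := by
    rcases hle.lt_or_eq with hlt | heq
    · obtain ⟨u, hu⟩ : B.Nonempty := card_pos.1 (by omega)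
      exact ⟨u, hu, (hchild u (mem_children.1 (mem_filter.1 hu).1)).trans_lt hlt⟩
    · obtain ⟨u, hvu, hu⟩ := h.exists_isChild_lt hv
      exact ⟨u, mem_filter.2 ⟨mem_children.2 hvu, fun hanc =>
        (h.le_of_isAncestor hanc).not_gt (heq ▸ hu)⟩, hu⟩
  obtain ⟨Z, huZ, hZB, hZ⟩ := exists_subsuperset_card_eq (n := G.degree v - G.degree w)
    (singleton_subset_iff.2 huB) (by rw [card_singleton]; omega) (by omega)
  have hZchild (z) (hz : z ∈ Z) : IsChild G r v z := mem_children.1 (mem_filter.1 (hZB hz)).1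
  exact hu.ne <| h.eq_of_shift hvw hv hw hZchild (fun z hz => (mem_filter.1 (hZB hz)).2) (by omega)
    hle (fun z hz => hchild z (hZchild z hz)) u (singleton_subset_iff.1 huZ)

end IsRootedMinimizer

end RootedMinimizer

section Spiral

/-- The number with base-`b` digits `1, key (p^[k-1] v), …, key (p v), key v`. For the parent map
`p` of a rooted tree and `k` the height of `v`, comparing these numbers amounts to comparing
heights first and then, lexicographically, the paths from the root. -/
def pathIndex {V : Type*} (p : V → V) (b : ℕ) (key : V → ℕ) : ℕ → V → ℕ
  | 0, _ => 1
  | k + 1, v => b * pathIndex p b key k (p v) + key v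

variable {V : Type*} {p : V → V} {b : ℕ} {key : V → ℕ}

lemma pow_le_pathIndex (k : ℕ) (v : V) : b ^ k ≤ pathIndex p b key k v := by
  induction k generalizing v with
  | zero => rfl
  | succ k ih =>
    rw [pathIndex, pow_succ']
    exact le_add_right (Nat.mul_le_mul_left b (ih _))

lemma pathIndex_lt (hkey : ∀ v, key v < b) (k : ℕ) (v : V) :
    pathIndex p b key k v < 2 * b ^ k := by
  induction k generalizing v with
  | zero => exact one_lt_two
  | succ k ih =>
    calc b * pathIndex p b key k (p v) + key v
        < b * (pathIndex p b key k (p v) + 1) := Nat.add_lt_add_left (hkey v) _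
      _ ≤ b * (2 * b ^ k) := Nat.mul_le_mul_left b (ih _)
      _ = 2 * b ^ (k + 1) := by ring

lemma le_of_pathIndex_le (hb : 2 ≤ b) (hkey : ∀ v, key v < b) {k l : ℕ} {v w : V}
    (h : pathIndex p b key k v ≤ pathIndex p b key l w) : k ≤ l := by
  by_contra! hlt
  refine h.not_gt ?_
  calc pathIndex p b key l w < 2 * b ^ l := pathIndex_lt hkey l w
    _ ≤ b ^ (l + 1) := by rw [pow_succ']; exact Nat.mul_le_mul_right _ hb
    _ ≤ b ^ k := Nat.pow_le_pow_right (by omega) hlt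
    _ ≤ pathIndex p b key k v := pow_le_pathIndex k v

lemma exists_injective_key [Fintype V] (f : V → ℝ) : ∃ key : V → ℕ, Function.Injective key ∧
    (∀ v, key v < Fintype.card V) ∧ ∀ v w, key v ≤ key w → f w ≤ f v := by
  let e := Fintype.equivFin V
  let g : Fin (Fintype.card V) → ℝ := fun i => -f (e.symm i)
  let key : V ≃ Fin (Fintype.card V) := e.trans (Tuple.sort g).symm
  refine ⟨fun v => key v, Fin.val_injective.comp key.injective, fun v => (key v).isLt,
    fun v w h => ?_⟩
  simpa [g, key] using Tuple.monotone_sort g (a := key v) (b := key w) h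

variable {G : SimpleGraph V} {f : V → ℝ} {r : V} {N : V → ℕ}

/-- The position of a vertex in a spiral-like ordering of the tree `G` with root `r`, where
siblings are ordered by decreasing values of `f`. -/
structure IsSpiralNumbering (G : SimpleGraph V) (f : V → ℝ) (r : V) (N : V → ℕ) : Prop where
  injective : Function.Injective N
  dist_le : ∀ v w, N v ≤ N w → G.dist r v ≤ G.dist r w
  lt_of_isChild : ∀ v v' w w', N v < N v' → IsChild G r v w → IsChild G r v' w' → N w < N w'
  le_of_sibling : ∀ v w w', IsChild G r v w → IsChild G r v w' → N w ≤ N w' → f w' ≤ f w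

lemma pathIndex_dist (hG : G.IsTree) {v w : V} (h : IsChild G r v w) :
    pathIndex (parent G r) b key (G.dist r w) w
      = b * pathIndex (parent G r) b key (G.dist r v) v + key w := by
  rw [h.2, pathIndex, h.parent_eq hG]

lemma injective_pathIndex_dist (hG : G.IsTree) (hb : 2 ≤ b) (hkey : ∀ v, key v < b)
    (hinj : Function.Injective key) :
    Function.Injective fun v => pathIndex (parent G r) b key (G.dist r v) v := by
  intro v w h
  have hdist : G.dist r v = G.dist r w :=
    (le_of_pathIndex_le hb hkey h.le).antisymm (le_of_pathIndex_le hb hkey h.ge)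
  obtain rfl | hv := eq_or_ne v r
  · rwa [SimpleGraph.dist_self, eq_comm, hG.connected.dist_eq_zero_iff] at hdist
  have hw : w ≠ r := by
    rintro rfl
    rw [SimpleGraph.dist_self, hG.connected.dist_eq_zero_iff] at hdist
    exact hv hdist.symm
  simp only [pathIndex_dist hG (isChild_parent hG.connected hv),
    pathIndex_dist hG (isChild_parent hG.connected hw)] at h
  have hmod := congrArg (· % b) h
  simp only [Nat.mul_add_mod, Nat.mod_eq_of_lt (hkey _)] at hmod
  exact hinj hmod

lemma exists_isSpiralNumbering [Finite V] (hG : G.IsTree) (f : V → ℝ) (r : V) :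
    ∃ N, IsSpiralNumbering G f r N := by
  have := Fintype.ofFinite V
  obtain ⟨key, hinj, hlt, hf⟩ := exists_injective_key f
  have hkey (v) : key v < Fintype.card V + 2 := (hlt v).trans_le (Nat.le_add_right _ _)
  have hb : 2 ≤ Fintype.card V + 2 := Nat.le_add_left _ _
  refine ⟨_, injective_pathIndex_dist (r := r) hG hb hkey hinj,
    fun _ _ h => le_of_pathIndex_le hb hkey h, fun v v' w w' h hw hw' => ?_,
    fun v w w' hw hw' h => hf _ _ ?_⟩
  · rw [pathIndex_dist hG hw, pathIndex_dist hG hw']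
    have := hkey w
    nlinarith
  · rw [pathIndex_dist hG hw, pathIndex_dist hG hw'] at h
    exact Nat.le_of_add_le_add_left h

namespace IsSpiralNumbering

lemma lt_of_parent (hN : IsSpiralNumbering G f r N) {v w : V} (h : IsChild G r v w) :
    N v < N w := by
  by_contra! hle
  have := hN.dist_le w v hle
  have := h.2
  omega

lemma le [Fintype V] (hN : IsSpiralNumbering G f r N) (h : IsRootedMinimizer G f r) {v w : V}
    (hle : N v ≤ N w) : f w ≤ f v := by
  induction hk : G.dist r v generalizing v w with
  | zero =>
    rw [← h.connected.dist_eq_zero_iff.1 hk]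
    exact h.le_root w
  | succ k ih =>
    rcases (hN.dist_le v w hle).lt_or_eq with hlt | heq
    · exact h.le_of_dist_lt hlt
    have hv : v ≠ r := by rintro rfl; simp at hk
    have hw : w ≠ r := by rintro rfl; simp [hk] at heq
    have hpv := isChild_parent h.connected hv
    have hpw := isChild_parent h.connected hw
    by_cases hp : parent G r v = parent G r w
    · exact hN.le_of_sibling _ v w (hp ▸ hpv) hpw hle
    refine h.le_of_parent_le_of_dist_eq hv hw hp heq (ih (le_of_not_gt fun hlt => ?_) ?_)
    · exact hle.not_gt (hN.lt_of_isChild _ _ _ _ hlt hpw hpv)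
    · have := hpv.2
      omega

lemma degree_le [Fintype V] (hN : IsSpiralNumbering G f r N) (h : IsRootedMinimizer G f r) {v w : V}
    (hlt : N v < N w) (hv : IsInterior G v) (hw : IsInterior G w) : G.degree v ≤ G.degree w := by
  induction hk : N w - N v using Nat.strong_induction_on generalizing v w with
  | _ k ih =>
    by_cases hx : ∃ x, IsInterior G x ∧ N v < N x ∧ N x < N w
    · obtain ⟨x, hx, hvx, hxw⟩ := hx
      exact (ih _ (by omega) hvx hv hx rfl).trans (ih _ (by omega) hxw hx hw rfl)
    push Not at hx
    refine h.degree_le_of_forall_isChild_le (fun heq => (heq ▸ hlt).false) hv hw (hN.le h hlt.le)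
      fun x hvx => ?_
    rcases h.isTreeWithBoundary.isBoundary_or_isInterior x with hb | hi
    · rw [h.isPerron.eq_zero hb]
      exact h.nonneg w
    · exact hN.le h (hx x hi (hN.lt_of_parent hvx))

lemma isSLOStarOrdering [Fintype V] (hN : IsSpiralNumbering G f r N)
    (h : IsRootedMinimizer G f r) : IsSLOStarOrdering G r (N · < N ·) := by
  refine ⟨⟨?_, fun v w hlt => hN.dist_le v w hlt.le, hN.lt_of_isChild, fun v w hlt hv => ?_⟩,
    fun v w hlt hv hw => hN.degree_le h hlt hv hw⟩
  · exact
      { irrefl := fun v => lt_irrefl (N v)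
        trans := fun _ _ _ => lt_trans
        trichotomous := fun _ _ h₁ h₂ => hN.injective (by omega) }
  · refine (h.isTreeWithBoundary.isBoundary_or_isInterior w).resolve_right fun hw => ?_
    have := hN.le h hlt.le
    rw [h.isPerron.eq_zero hv] at this
    exact this.not_gt (h.isPerron.pos w hw)

end IsSpiralNumbering

lemma IsFaberKrahn.isSLOStarTree [Fintype V] (hG : IsTreeWithBoundary G) (hmin : IsFaberKrahn G) :
    IsSLOStarTree G := by
  obtain ⟨f, r, h⟩ := hmin.exists_isRootedMinimizer hG
  obtain ⟨N, hN⟩ := exists_isSpiralNumbering h.isTree f r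
  exact ⟨hG, r, _, hN.isSLOStarOrdering h⟩

end Spiral

section Uniqueness

lemma eq_of_monotone_of_map_univ_eq {α : Type*} [PartialOrder α] {n : ℕ} {f g : Fin n → α}
    (hf : Monotone f) (hg : Monotone g)
    (h : (univ : Finset (Fin n)).val.map f = (univ : Finset (Fin n)).val.map g) : f = g := by
  rw [Fin.univ_val_map, Fin.univ_val_map, Multiset.coe_eq_coe] at h
  exact List.ofFn_injective (h.eq_of_sortedLE hf.sortedLE_ofFn hg.sortedLE_ofFn)

lemma exists_equiv_fin_lt_iff {V : Type*} [Fintype V] {lt : V → V → Prop}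
    (h : IsStrictTotalOrder V lt) {n : ℕ} (hn : Fintype.card V = n) :
    ∃ e : V ≃ Fin n, ∀ u v, e u < e v ↔ lt u v := by
  let : LinearOrder V := linearOrderOfSTO lt
  let o := Fintype.orderIsoFinOfCardEq V hn
  exact ⟨o.symm.toEquiv, fun _ _ => o.symm.lt_iff_lt⟩

/-- A relabelling of the degrees that makes them increase along an SLO*-ordering: the interior
degrees increase and are followed by the boundary degree `1`. -/
def degreeKey (d : ℕ) : WithTop ℕ := if d = 1 then ⊤ else d

lemma degreeKey_injective : Function.Injective degreeKey := fun a b h => by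
  unfold degreeKey at h
  split_ifs at h with ha hb hb
  · rw [ha, hb]
  · exact absurd h.symm (WithTop.coe_ne_top)
  · exact absurd h (WithTop.coe_ne_top)
  · exact_mod_cast h

variable {V W : Type*} [Fintype V] [Fintype W] {G : SimpleGraph V} {G' : SimpleGraph W}
  {r : V} {r' : W} {n : ℕ} {e : V ≃ Fin n} {e' : W ≃ Fin n} {lt : V → V → Prop}

/-- An SLO*-ordering of the tree `G` with root `r`, as an enumeration `e` of the vertices: it is
only recorded that the root comes first and that the degrees and the positions of the parents
increase. -/
structure IsSpiralEnumeration (G : SimpleGraph V) (r : V) (e : V ≃ Fin n) : Prop where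
  root_le : ∀ i, e r ≤ i
  monotone_degreeKey : Monotone fun i => degreeKey (G.degree (e.symm i))
  monotone_parent : Monotone fun i => e (parent G r (e.symm i))

lemma IsSLOOrdering.not_lt_root (h : IsSLOOrdering G r lt) (hG : G.Connected) (v : V) :
    ¬ lt v r := fun hlt => by
  have hdist := h.2.1 v r hlt
  rw [SimpleGraph.dist_self, Nat.le_zero, hG.dist_eq_zero_iff] at hdist
  exact h.1.irrefl _ (hdist ▸ hlt)

lemma IsSLOOrdering.not_lt_parent (h : IsSLOOrdering G r lt) (hG : G.Connected) {v w : V}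
    (hlt : lt v w) : ¬ lt (parent G r w) (parent G r v) := fun hlt' => by
  obtain rfl | hv := eq_or_ne v r
  · rw [parent_root] at hlt'
    exact h.not_lt_root hG _ hlt'
  obtain rfl | hw := eq_or_ne w r
  · exact h.not_lt_root hG v hlt
  exact h.1.irrefl _ <| h.1.trans _ _ _ hlt <|
    h.2.2.1 _ _ _ _ hlt' (isChild_parent hG hw) (isChild_parent hG hv)

lemma IsSLOStarOrdering.degreeKey_le (h : IsSLOStarOrdering G r lt)
    (hG : ∀ v, IsBoundary G v ∨ IsInterior G v) {v w : V} (hlt : lt v w) :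
    degreeKey (G.degree v) ≤ degreeKey (G.degree w) := by
  rcases hG w with hw | hw
  · exact le_top.trans_eq (if_pos hw).symm
  rcases hG v with hv | hv
  · exact absurd (h.1.2.2.2 v w hlt hv) hw.not_isBoundary
  have hv1 : G.degree v ≠ 1 := hv.not_isBoundary
  have hw1 : G.degree w ≠ 1 := hw.not_isBoundary
  rw [degreeKey, if_neg hv1, degreeKey, if_neg hw1]
  exact_mod_cast h.2 v w hlt hv hw

lemma IsSLOStarOrdering.isSpiralEnumeration (h : IsSLOStarOrdering G r lt)
    (hG : IsTreeWithBoundary G) (he : ∀ u v, e u < e v ↔ lt u v) : IsSpiralEnumeration G r e := by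
  have hlt {i j} (hij : i < j) : lt (e.symm i) (e.symm j) := by simpa [← he] using hij
  refine ⟨fun i => le_of_not_gt fun hi => ?_, monotone_iff_forall_lt.2 fun i j hij => ?_,
    monotone_iff_forall_lt.2 fun i j hij => le_of_not_gt fun hgt => ?_⟩
  · refine h.1.not_lt_root hG.1.connected (e.symm i) ?_
    simpa [← he] using hi
  · exact h.degreeKey_le hG.isBoundary_or_isInterior (hlt hij)
  · exact h.1.not_lt_parent hG.1.connected (hlt hij) ((he _ _).1 hgt)

lemma IsSLOStarTree.exists_isSpiralEnumeration (hG : IsSLOStarTree G)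
    (hn : Fintype.card V = n) : ∃ (r : V) (e : V ≃ Fin n), IsSpiralEnumeration G r e := by
  obtain ⟨hT, r, lt, h⟩ := hG
  obtain ⟨e, he⟩ := exists_equiv_fin_lt_iff h.1.1 hn
  exact ⟨r, e, h.isSpiralEnumeration hT he⟩

/-- The root is counted among the vertices with parent the root. -/
lemma card_filter_parent_eq (hG : G.IsTree) (v : V) :
    #{x | parent G r x = v} = if v = r then G.degree v + 1 else G.degree v - 1 := by
  split_ifs with hv
  · subst hv
    have hins : ({x | parent G v x = v} : Finset V) = insert v (children G v v) := by
      ext x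
      obtain rfl | hx := eq_or_ne x v <;> simp [isChild_iff hG, *]
    rw [hins, card_insert_of_notMem (by simp [isChild_iff hG]), degree_root hG]
  · rw [degree_eq_card_children_add_one hG hv, Nat.add_sub_cancel]
    congr 1
    ext x
    obtain rfl | hx := eq_or_ne x r <;> simp [isChild_iff hG, Ne.symm, *]

lemma count_map_parent (hG : G.IsTree) (e : V ≃ Fin n) (j : Fin n) :
    Multiset.count j ((univ : Finset (Fin n)).val.map fun i => e (parent G r (e.symm i)))
      = if j = e r then G.degree (e.symm j) + 1 else G.degree (e.symm j) - 1 := by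
  have h := card_filter_parent_eq (r := r) hG (e.symm j)
  simp only [Equiv.symm_apply_eq] at h
  rw [Multiset.count_map, ← filter_val, card_val, ← h]
  refine card_equiv e.symm fun i => ?_
  rw [mem_filter_univ, mem_filter_univ, Equiv.eq_symm_apply, eq_comm]

lemma map_univ_degreeKey (e : V ≃ Fin n) :
    (univ : Finset (Fin n)).val.map (fun i => degreeKey (G.degree (e.symm i)))
      = (degreeMultiset G).map degreeKey := by
  rw [degreeMultiset, ← Multiset.map_univ_val_equiv e.symm, Multiset.map_map, Multiset.map_map]
  rfl

namespace IsSpiralEnumeration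

lemma degree_eq (h : IsSpiralEnumeration G r e) (h' : IsSpiralEnumeration G' r' e')
    (hdeg : degreeMultiset G = degreeMultiset G') (i : Fin n) :
    G.degree (e.symm i) = G'.degree (e'.symm i) := by
  have hkey := eq_of_monotone_of_map_univ_eq h.monotone_degreeKey h'.monotone_degreeKey
    (by rw [map_univ_degreeKey, map_univ_degreeKey, hdeg])
  exact degreeKey_injective (congrFun hkey i)

lemma root_eq (h : IsSpiralEnumeration G r e) (h' : IsSpiralEnumeration G' r' e') : e r = e' r' :=
  (h.root_le _).antisymm (h'.root_le _)

/-- The degrees determine how often each vertex occurs as a parent. -/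
lemma parent_eq (h : IsSpiralEnumeration G r e) (h' : IsSpiralEnumeration G' r' e')
    (hG : G.IsTree) (hG' : G'.IsTree) (hdeg : degreeMultiset G = degreeMultiset G') (i : Fin n) :
    e (parent G r (e.symm i)) = e' (parent G' r' (e'.symm i)) := by
  have hcount := eq_of_monotone_of_map_univ_eq h.monotone_parent h'.monotone_parent <| by
    ext j
    rw [count_map_parent hG, count_map_parent hG', h.root_eq h', h.degree_eq h' hdeg]
  exact congrFun hcount i

end IsSpiralEnumeration

/-- Along an SLO*-ordering the degree sequence determines the degree of each vertex, and the
degrees determine the parents. -/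
lemma IsSLOStarTree.nonempty_iso (hG : IsSLOStarTree G) (hG' : IsSLOStarTree G')
    (hdeg : degreeMultiset G = degreeMultiset G') : Nonempty (G ≃g G') := by
  have hcard : Fintype.card W = Fintype.card V := by
    simpa [degreeMultiset] using congrArg Multiset.card hdeg.symm
  obtain ⟨r, e, h⟩ := hG.exists_isSpiralEnumeration rfl
  obtain ⟨r', e', h'⟩ := hG'.exists_isSpiralEnumeration hcard
  refine nonempty_iso_of_parent_comm hG.1.1 hG'.1.1 (e.trans e'.symm) (r := r) (r' := r')
    ?_ fun v => ?_
  · simp [h.root_eq h']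
  · simpa [Equiv.symm_apply_eq] using h.parent_eq h' hG.1.1 hG'.1.1 hdeg (e v)

end Uniqueness

section Isomorphism

variable {V W : Type*} [Fintype V] [Fintype W] {G : SimpleGraph V} {G' : SimpleGraph W}

lemma lapApply_comp_iso (φ : G ≃g G') (f : W → ℝ) (v : V) :
    lapApply G (f ∘ φ) v = lapApply G' f (φ v) := by
  rw [lapApply, lapApply, φ.degree_eq]
  congr 1
  refine sum_equiv φ.toEquiv (fun w => ?_) fun _ _ => rfl
  rw [SimpleGraph.mem_neighborFinset, SimpleGraph.mem_neighborFinset]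
  exact φ.map_adj_iff.symm

lemma IsDirichletEigenpair.comp_iso {μ : ℝ} {f : W → ℝ} (hf : IsDirichletEigenpair G' μ f)
    (φ : G ≃g G') : IsDirichletEigenpair G μ (f ∘ φ) := by
  refine ⟨fun h => hf.1 ?_, fun v hv => hf.2.1 _ ((φ.degree_eq v).trans hv), fun v hv => ?_⟩
  · exact φ.surjective.injective_comp_right h
  · rw [lapApply_comp_iso]
    exact hf.2.2 _ (hv.trans_eq (φ.degree_eq v).symm)

lemma dirichletLambda_eq_of_iso (φ : G ≃g G') : dirichletLambda G = dirichletLambda G' := by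
  rw [dirichletLambda, dirichletLambda]
  congr 1
  ext μ
  exact ⟨fun ⟨_, hf⟩ => ⟨_, hf.comp_iso φ.symm⟩, fun ⟨_, hf⟩ => ⟨_, hf.comp_iso φ⟩⟩

end Isomorphism

section DegreeSequence

variable {π : Multiset ℕ} {G : SimpleGraph (Fin (Multiset.card π))}

lemma isSLOStarTree_of_hasFKPi (h : hasFKPi π G) : IsSLOStarTree G :=
  IsFaberKrahn.isSLOStarTree h.1.1 fun G' h1 h2 => h.2 G' ⟨h1, h2.trans h.1.2⟩

lemma exists_hasFKPi (h : inClassPi π G) : ∃ G', hasFKPi π G' :=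
  Set.exists_min_image {H | inClassPi π H} dirichletLambda (Set.toFinite _) ⟨G, h⟩

end DegreeSequence

/-- **Theorem 3.** A tree `G` with degree sequence `π` has the Faber-Krahn
property in the class `T_π` if and only if it is an SLO*-tree; `G` is then
uniquely determined up to isomorphism. -/
theorem faberKrahn_Tpi (π : Multiset ℕ)
    (G : SimpleGraph (Fin (Multiset.card π))) (hG : inClassPi π G) :
    (hasFKPi π G ↔ IsSLOStarTree G) ∧
    (hasFKPi π G → ∀ G' : SimpleGraph (Fin (Multiset.card π)), hasFKPi π G' →
        Nonempty (G ≃g G')) := by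
  refine ⟨⟨isSLOStarTree_of_hasFKPi, fun h => ?_⟩, fun h G' h' => ?_⟩
  · obtain ⟨G', h'⟩ := exists_hasFKPi hG
    obtain ⟨φ⟩ := h.nonempty_iso (isSLOStarTree_of_hasFKPi h') (hG.2.trans h'.1.2.symm)
    exact ⟨hG, fun H hH => (dirichletLambda_eq_of_iso φ).trans_le (h'.2 H hH)⟩
  · exact (isSLOStarTree_of_hasFKPi h).nonempty_iso (isSLOStarTree_of_hasFKPi h')
      (h.1.2.trans h'.1.2.symm)

end FK
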